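/- arXiv:1407.5754 — 2 statements merged into one kernel-verified Lean document; each statement's English description precedes it below -/
import Mathlib

section
/- (Proposition 2, consistency with the global optimum) Let V be a finite set of sites, 𝓔 a set of edges on V, L a finite nonempty set of labels, with singleton energies E_i, pairwise energies E_{ij}, total energy E, subset τ ⊆ V, and conditional energy E_τ. Let x^map : V → L be a global minimizer of E, i.e., E(x^map) ≤ E(x) for every labeling x. Let x̂ : V → L be a labeling that agrees with x^map on V \ τ and minimizes E_τ among all labelings agreeing with x^map on V \ τ. Then x̂ is also a global minimizer of E, i.e., E(x̂) = E(x^map). -/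
open Finset

/-- Proposition 2: if `xmap` is a global minimizer of the total energy `E`
and `xhat` agrees with `xmap` outside `τ` while minimizing the conditional tree energy
`Eτ` among all such labelings, then `xhat` is also a global minimizer of `E`. -/
theorem conditional_tree_update_global_min
    (V L : Type*) [Fintype V] [DecidableEq V] [Fintype L] [Nonempty L]
    (𝓔 : Finset (V × V)) (hNoLoop : ∀ e ∈ 𝓔, e.1 ≠ e.2)
    (Es : V → L → ℝ) (Ep : V → V → L → L → ℝ)
    (τ : Finset V)
    (E : (V → L) → ℝ)
    (hE : ∀ x : V → L,
      E x = ∑ i, Es i (x i) + ∑ e ∈ 𝓔, Ep e.1 e.2 (x e.1) (x e.2))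
    (Eτ : (V → L) → ℝ)
    (hEτ : ∀ x : V → L,
      Eτ x = ∑ i ∈ τ, Es i (x i)
        + ∑ e ∈ 𝓔.filter (fun e => e.1 ∈ τ ∧ e.2 ∈ τ), Ep e.1 e.2 (x e.1) (x e.2)
        + ∑ e ∈ 𝓔.filter (fun e => (e.1 ∈ τ ∧ e.2 ∉ τ) ∨ (e.1 ∉ τ ∧ e.2 ∈ τ)),
            Ep e.1 e.2 (x e.1) (x e.2))
    (xmap : V → L)
    (hmap : ∀ x : V → L, E xmap ≤ E x)
    (xhat : V → L)
    (hagree : ∀ i, i ∉ τ → xhat i = xmap i)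
    (hmin : ∀ y : V → L, (∀ i, i ∉ τ → y i = xmap i) → Eτ xhat ≤ Eτ y) :
    E xhat = E xmap := by
  have key : ∀ x : V → L, E x - Eτ x
      = ∑ i, (if i ∈ τ then 0 else Es i (x i))
        + ∑ e ∈ 𝓔, (if e.1 ∉ τ ∧ e.2 ∉ τ then Ep e.1 e.2 (x e.1) (x e.2) else 0) := by
    intro x
    have h1 : ∑ i, Es i (x i)
        = ∑ i ∈ τ, Es i (x i) + ∑ i, (if i ∈ τ then 0 else Es i (x i)) := by
      have h0 : ∑ i ∈ τ, Es i (x i) = ∑ i, (if i ∈ τ then Es i (x i) else 0) := by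
        simp
      rw [h0, ← Finset.sum_add_distrib]
      refine Finset.sum_congr rfl fun i _ => ?_
      split_ifs <;> simp
    have h2 : ∑ e ∈ 𝓔, Ep e.1 e.2 (x e.1) (x e.2)
        = ∑ e ∈ 𝓔.filter (fun e => e.1 ∈ τ ∧ e.2 ∈ τ), Ep e.1 e.2 (x e.1) (x e.2)
        + ∑ e ∈ 𝓔.filter (fun e => (e.1 ∈ τ ∧ e.2 ∉ τ) ∨ (e.1 ∉ τ ∧ e.2 ∈ τ)),
            Ep e.1 e.2 (x e.1) (x e.2)
        + ∑ e ∈ 𝓔, (if e.1 ∉ τ ∧ e.2 ∉ τ then Ep e.1 e.2 (x e.1) (x e.2) else 0) := by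
      rw [Finset.sum_filter, Finset.sum_filter, ← Finset.sum_add_distrib,
        ← Finset.sum_add_distrib]
      refine Finset.sum_congr rfl fun e _ => ?_
      by_cases ha : e.1 ∈ τ <;> by_cases hb : e.2 ∈ τ <;> simp [ha, hb]
    rw [hE, hEτ, h1, h2]
    ring
  have same : E xhat - Eτ xhat = E xmap - Eτ xmap := by
    rw [key, key]
    congr 1
    · refine Finset.sum_congr rfl fun i _ => ?_
      split_ifs with h
      · rfl
      · rw [hagree i h]
    · refine Finset.sum_congr rfl fun e _ => ?_
      split_ifs with h
      · rw [hagree _ h.1, hagree _ h.2]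
      · rfl
  have h1 := hmin xmap fun _ _ => rfl
  have h2 := hmap xhat
  linarith
end

section
/- (Markov property: the conditional distribution of a tree depends only on its Markov blanket) Let V be a finite set of sites, 𝓔 a set of edges on V, L a finite nonempty set of labels, with singleton energies E_i, pairwise energies E_{ij}, total energy E, and Gibbs probability P(x) = exp(−E(x))/Z. Let τ ⊆ V and let N(τ) be the Markov blanket of τ, i.e., the set of sites j ∉ τ such that some edge of 𝓔 joins j to a site of τ. For a labeling x : V → L and z : τ → L, write x[z] for the labeling equal to z on τ and to x on V \ τ. If two labelings x and x' agree on N(τ), then for every z : τ → L, P(x[z]) / (Σ_{z' : τ → L} P(x[z'])) = P(x'[z]) / (Σ_{z' : τ → L} P(x'[z'])); that is, the conditional distribution of the labels on τ given the labels outside τ depends on the outside labels only through their values on N(τ). -/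
open Finset

/-- Markov property: the conditional Gibbs distribution of the labels on a
subset `τ`, given the labels outside `τ`, depends on the outside labels only through
their values on the Markov blanket `N(τ)` of `τ` (the sites outside `τ` joined by an
edge of `𝓔` to some site of `τ`). Here `patch x z` denotes the labeling equal to `z`
on `τ` and to `x` off `τ`. -/
theorem markov_property_conditional_tree
    (V L : Type*) [Fintype V] [DecidableEq V] [Fintype L] [Nonempty L]
    (𝓔 : Finset (V × V)) (hNoLoop : ∀ e ∈ 𝓔, e.1 ≠ e.2)
    (Es : V → L → ℝ) (Ep : V → V → L → L → ℝ)
    (τ : Finset V)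
    (E : (V → L) → ℝ)
    (hE : ∀ x : V → L,
      E x = ∑ i, Es i (x i) + ∑ e ∈ 𝓔, Ep e.1 e.2 (x e.1) (x e.2))
    (Z : ℝ)
    (hZ : Z = ∑ x' : V → L, Real.exp (-(E x')))
    (P : (V → L) → ℝ)
    (hP : ∀ x : V → L, P x = Real.exp (-(E x)) / Z)
    (patch : (V → L) → (↥τ → L) → (V → L))
    (hpatch : ∀ (x : V → L) (z : ↥τ → L) (i : V),
      patch x z i = if h : i ∈ τ then z ⟨i, h⟩ else x i)
    (x x' : V → L)
    (hblanket : ∀ j : V, j ∉ τ →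
      (∃ i ∈ τ, (i, j) ∈ 𝓔 ∨ (j, i) ∈ 𝓔) → x j = x' j) :
    ∀ z : ↥τ → L,
      P (patch x z) / (∑ z' : ↥τ → L, P (patch x z'))
        = P (patch x' z) / (∑ z' : ↥τ → L, P (patch x' z')) := by
  intro z
  have key : ∀ w : ↥τ → L,
      E (patch x w) - E (patch x' w) = E (patch x z) - E (patch x' z) := by
    intro w
    have h1 : ∑ i, (Es i (patch x w i) - Es i (patch x' w i))
        = ∑ i, (Es i (patch x z i) - Es i (patch x' z i)) := by
      refine Finset.sum_congr rfl fun i _ => ?_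
      simp only [hpatch]
      by_cases hi : i ∈ τ <;> simp [hi]
    have h2 : ∑ e ∈ 𝓔, (Ep e.1 e.2 (patch x w e.1) (patch x w e.2)
          - Ep e.1 e.2 (patch x' w e.1) (patch x' w e.2))
        = ∑ e ∈ 𝓔, (Ep e.1 e.2 (patch x z e.1) (patch x z e.2)
          - Ep e.1 e.2 (patch x' z e.1) (patch x' z e.2)) := by
      refine Finset.sum_congr rfl fun e he => ?_
      obtain ⟨a, b⟩ := e
      simp only [hpatch]
      by_cases ha : a ∈ τ <;> by_cases hb : b ∈ τ
      · simp [ha, hb]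
      · simp [ha, hb, hblanket b hb ⟨a, ha, Or.inl he⟩]
      · simp [ha, hb, hblanket a ha ⟨b, hb, Or.inr he⟩]
      · simp [ha, hb]
    simp only [Finset.sum_sub_distrib] at h1 h2
    simp only [hE]
    linarith
  have hc : ∀ w : ↥τ → L, P (patch x w)
      = Real.exp (-(E (patch x z) - E (patch x' z))) * P (patch x' w) := by
    intro w
    rw [hP, hP, ← key w, ← mul_div_assoc, ← Real.exp_add]
    congr 2
    ring
  simp only [hc]
  rw [← Finset.mul_sum, mul_div_mul_left _ _ (Real.exp_ne_zero _)]
end
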